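/- The only positive Munchausen number in base 8 is 1; that is, for n ≥ 1, n = P_8(n) if and only if n = 1. -/

import Mathlib

/-- Digit power sum: `P b n = Σ cᵢ^cᵢ` over the base-`b` digits of `n`, with `0^0 = 1`. -/
def P (b n : ℕ) : ℕ := ((Nat.digits b n).map (fun c => c ^ c)).sum

/-!
A number with `m` digits in base `b` is at least `b ^ (m - 1)`, while its digit power sum is at most
`m * (b - 1) ^ (b - 1)`; hence a Munchausen number in base `b` has at most `b` digits. Its digit
power sum depends only on how often each digit occurs, and `0 ^ 0 = 1 ^ 1` makes it unnecessary to
distinguish the digits 0 and 1. This leaves `(2 * b - 1).choose b` choices of the multiplicities of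
`b - 1` kinds of digits with total at most `b`. In base 8 these are 6435 candidates, few enough to
be tested one by one.
-/

/-- The values of `∑ c < d, f c * w c`, listed with repetition, as `f` ranges over the
multiplicities with `∑ c < d, f c ≤ k`: the possible sums of at most `k` symbols from an alphabet
`{0, …, d - 1}` in which `c` has weight `w c`. With suitable weights these are the candidates for a
Munchausen number. -/
def weightedSums (w : ℕ → ℕ) : ℕ → ℕ → List ℕ
  | 0, _ => [0]
  | d + 1, k => (List.range (k + 1)).flatMap fun j =>
      (weightedSums w d (k - j)).map (· + j * w d)

theorem sum_mem_weightedSums (w f : ℕ → ℕ) {d k : ℕ} (hk : ∑ c ∈ Finset.range d, f c ≤ k) :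
    ∑ c ∈ Finset.range d, f c * w c ∈ weightedSums w d k := by
  induction d generalizing k with
  | zero => simp [weightedSums]
  | succ d ih =>
    rw [Finset.sum_range_succ] at hk ⊢
    simp only [weightedSums, List.mem_flatMap, List.mem_range, List.mem_map]
    exact ⟨f d, by lia, _, ih (by lia), rfl⟩

theorem sum_map_mem_weightedSums (w : ℕ → ℕ) {l : List ℕ} {d k : ℕ} (hd : ∀ c ∈ l, c < d)
    (hk : l.length ≤ k) : (l.map w).sum ∈ weightedSums w d k := by
  have hl : ∀ c ∈ (l : Multiset ℕ), c ∈ Finset.range d := by simpa using hd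
  have hsum : (l.map w).sum = ∑ c ∈ Finset.range d, l.count c * w c := by
    rw [Finset.sum_list_map_count]
    refine Finset.sum_subset (fun c hc => hl c (by simpa using hc)) fun c _ hc => ?_
    simp [List.count_eq_zero.mpr (mt List.mem_toFinset.mpr hc)]
  have hlength : ∑ c ∈ Finset.range d, l.count c = l.length := by
    simpa using Multiset.sum_count_eq_card hl
  rw [hsum]
  exact sum_mem_weightedSums w _ (hlength.trans_le hk)

theorem P_le_length_digits_mul_pow {b : ℕ} (hb : 1 < b) (n : ℕ) :
    P b n ≤ (Nat.digits b n).length * (b - 1) ^ (b - 1) := by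
  have hpow : ∀ x ∈ (Nat.digits b n).map (fun c => c ^ c), x ≤ (b - 1) ^ (b - 1) := by
    rw [List.forall_mem_map]
    exact fun c hc => Nat.pow_self_mono (Nat.le_sub_one_of_lt (Nat.digits_lt_base hb hc))
  simpa [P] using List.sum_le_card_nsmul _ _ hpow

theorem succ_mul_pred_pow_pred_lt_pow {b k : ℕ} (hb : 1 < b) (hk : b ≤ k) :
    (k + 1) * (b - 1) ^ (b - 1) < b ^ k := by
  induction k, hk using Nat.le_induction with
  | base =>
    obtain ⟨a, rfl⟩ := Nat.exists_eq_add_of_le' hb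
    calc (a + 2 + 1) * (a + 1) ^ (a + 1)
        = ((a + 3) * (a + 1)) * (a + 1) ^ a := by ring
      _ < (a + 2) ^ 2 * (a + 1) ^ a := by gcongr; lia
      _ ≤ (a + 2) ^ 2 * (a + 2) ^ a := by gcongr; lia
      _ = (a + 2) ^ (a + 2) := by ring
  | succ k _ ih =>
    calc (k + 1 + 1) * (b - 1) ^ (b - 1)
        ≤ b * (k + 1) * (b - 1) ^ (b - 1) := by gcongr; nlinarith
      _ = b * ((k + 1) * (b - 1) ^ (b - 1)) := mul_assoc ..
      _ < b * b ^ k := by gcongr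
      _ = b ^ (k + 1) := (pow_succ' b k).symm

theorem length_digits_le_of_eq_P {b n : ℕ} (hb : 1 < b) (h : n = P b n) :
    (Nat.digits b n).length ≤ b := by
  by_contra! hlong
  obtain ⟨k, hk⟩ := Nat.exists_eq_add_of_lt hlong
  have hlower : b ^ (b + k) ≤ n := (Nat.lt_digits_length_iff hb n).mp (by lia)
  have hupper : n ≤ (b + k + 1) * (b - 1) ^ (b - 1) := by
    simpa only [← h, hk] using P_le_length_digits_mul_pow hb n
  exact (hlower.trans hupper).not_gt (succ_mul_pred_pow_pred_lt_pow hb (Nat.le_add_right b k))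

-- Truncated subtraction sends both 0 and 1 to 0, which identifies the two digits of weight 1.
theorem P_eq_sum_map_sub_one (b n : ℕ) :
    P b n = (((Nat.digits b n).map (· - 1)).map fun c => (c + 1) ^ (c + 1)).sum := by
  have hself : ∀ c : ℕ, (c - 1 + 1) ^ (c - 1 + 1) = c ^ c
    | 0 => rfl
    | _ + 1 => rfl
  simp only [P, List.map_map, Function.comp_def, hself]

theorem mem_weightedSums_of_eq_P {b n : ℕ} (hb : 1 < b) (h : n = P b n) :
    n ∈ weightedSums (fun c => (c + 1) ^ (c + 1)) (b - 1) b := by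
  have hlt : ∀ c ∈ (Nat.digits b n).map (· - 1), c < b - 1 := by
    rw [List.forall_mem_map]
    intro c hc
    have := Nat.digits_lt_base hb hc
    lia
  have hlength : ((Nat.digits b n).map (· - 1)).length ≤ b := by
    simpa only [List.length_map] using length_digits_le_of_eq_P hb h
  rw [h, P_eq_sum_map_sub_one]
  exact sum_map_mem_weightedSums _ hlt hlength

theorem le_one_of_mem_weightedSums_of_eq_P_eight :
    ∀ n ∈ weightedSums (fun c => (c + 1) ^ (c + 1)) 7 8, n = P 8 n → n ≤ 1 := by
  -- `List.all` keeps the evaluation shallow; the kernel overflows its stack on the nested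
  -- `Decidable` instance of a quantifier over a list of this length.
  have hall : (weightedSums (fun c => (c + 1) ^ (c + 1)) 7 8).all
      (fun n => n = P 8 n → n ≤ 1) := by
    decide +kernel
  simpa only [List.all_eq_true, decide_eq_true_eq] using hall

theorem munchausen_base8 (n : ℕ) (hn : 1 ≤ n) :
    n = P 8 n ↔ n = 1 := by
  constructor
  · intro h
    have hmem : n ∈ weightedSums (fun c => (c + 1) ^ (c + 1)) 7 8 :=
      mem_weightedSums_of_eq_P (by norm_num) h
    exact (le_one_of_mem_weightedSums_of_eq_P_eight n hmem h).antisymm hn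
  · rintro rfl
    simp [P]
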